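/- Let steps : Fin 5 → ℕ×ℕ be given by steps = ((6,5), (0,1), (1,1), (3,3), (3,3)) (the step (3,3) appearing twice, corresponding to its two colors). For a, b ∈ ℕ let N(a,b) be the number of finite lists ℓ of elements of Fin 5 such that the componentwise sum of the steps along ℓ equals (a,b) (the empty list having sum (0,0)); this set of lists is finite. Then for every n ≥ 0, (N(n,n) : ℤ) = 2·((c_B(n) : ℤ) − (c_A(n) : ℤ)) + 1, i.e. Δ_n = (N_{S,C}(n,n) − 1)/2^{n+1} where S = {(6,5),(0,1),(1,1),(3,3)} with the step (3,3) having 2 colors and all other steps 1 color. -/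

import Mathlib

/-!
Write `z` for the formal variable. Both counts are identified with coefficients of explicit
algebraic power series, by solving linear systems indexed by `ℤ`.

**Paths.** Give a step `(x, y)` the length `3y - 2x` and the drift `x - y`. The five steps have
lengths `3, 3, 1, 3, 3` and drifts `1, -1, 0, 0, 0`, and a path ends at `(n, n)` exactly when it has
length `n` and drift `0`. If `P d` is the generating function by length of the paths of drift `d`,
removing the first step gives
`P d = [d = 0] + z P d + z³ (P (d-1) + 2 P d + P (d+1))`.

**Coins.** Let `T k` and `H k` be the generating functions of `∑ sgn (k + B(bs) - A(bs))`, summed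
over all flip sequences `s`, where the extra first flip `b` is tails, respectively heads. Looking at
the second flip gives `T k = sgn k + z (T k + H k)` and
`H k = sgn k + z (T (k+1) + H (k-1))`. A leading tails does not affect the scores, so `T 0` is the
generating function of `c_B(n) - c_A(n)`.

**Solution.** In both systems the `n`-th coefficients are determined by earlier ones, so each has at
most one solution (`eq_zero_of_dvd_step`). With `q = 1/(1-z)`, `w = z³ q` and `c = 1 + w c²` (the
Catalan series at `w`), the roots of zero constant term of the two characteristic equations are `c - 1` for the
paths, and `z c` (in the direction `k → ∞`) and `z² q c` (in the direction `k → -∞`) for the coins.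
Matching at `0` gives `P 0 = α` and `T 0 = w c α`, where `α (1 - 2 w c) = q`. Hence
`P 0 = 2 T 0 + 1/(1-z)`, which is the claim.
-/

/-- Bob's score: number of indices `i < n-1` with `s i = H` and `s (i+1) = T`
    (`true` = heads). -/
def bobScore {n : ℕ} (s : Fin n → Bool) : ℕ :=
  (Finset.univ.filter (fun i : Fin (n - 1) =>
    s ⟨i.1, lt_of_lt_of_le i.2 (Nat.sub_le n 1)⟩ = true ∧
    s ⟨i.1 + 1, Nat.add_lt_of_lt_sub i.2⟩ = false)).card

/-- Alice's score: number of indices `i < n-1` with `s i = H` and `s (i+1) = H`. -/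
def aliceScore {n : ℕ} (s : Fin n → Bool) : ℕ :=
  (Finset.univ.filter (fun i : Fin (n - 1) =>
    s ⟨i.1, lt_of_lt_of_le i.2 (Nat.sub_le n 1)⟩ = true ∧
    s ⟨i.1 + 1, Nat.add_lt_of_lt_sub i.2⟩ = true)).card

/-- Number of length-`n` coin sequences where Bob's score strictly exceeds Alice's. -/
def cB (n : ℕ) : ℕ :=
  (Finset.univ.filter (fun s : Fin n → Bool => aliceScore s < bobScore s)).card

/-- Number of length-`n` coin sequences where Alice's score strictly exceeds Bob's. -/
def cA (n : ℕ) : ℕ :=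
  (Finset.univ.filter (fun s : Fin n → Bool => bobScore s < aliceScore s)).card

/-- The colored step set `S = {(6,5),(0,1),(1,1),(3,3)}` with `(3,3)` having two
    colors (so it is listed twice). -/
def steps : Fin 5 → ℕ × ℕ := ![(6, 5), (0, 1), (1, 1), (3, 3), (3, 3)]

/-- `N(a,b)`: the number of colored lattice paths (lists of colored steps) whose
    componentwise sum of steps is `(a, b)`. -/
noncomputable def N (a b : ℕ) : ℕ :=
  Nat.card {ℓ : List (Fin 5) // (ℓ.map steps).sum = (a, b)}

open PowerSeries

/-! ### Uniqueness and the algebraic series -/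

/-- A family of power series is zero if divisibility of all members by `X ^ n` always improves to
divisibility by `X ^ (n + 1)`. -/
lemma eq_zero_of_dvd_step {ι : Type*} (U : ι → ℤ⟦X⟧)
    (h : ∀ n, (∀ k, (X : ℤ⟦X⟧) ^ n ∣ U k) → ∀ k, (X : ℤ⟦X⟧) ^ (n + 1) ∣ U k) (k : ι) :
    U k = 0 := by
  have key : ∀ n k, (X : ℤ⟦X⟧) ^ n ∣ U k := by
    intro n
    induction n with
    | zero => simp
    | succ n ih => exact h n ih
  ext n
  simpa using X_pow_dvd_iff.1 (key (n + 1) k) n (Nat.lt_succ_self n)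

/-- The Catalan equation `c = 1 + w c²` is solvable for every `w` without constant term. -/
lemma exists_catalan (w : ℤ⟦X⟧) (hw : constantCoeff w = 0) : ∃ c : ℤ⟦X⟧, c = 1 + w * c ^ 2 := by
  have hs : HasSubst w := HasSubst.of_constantCoeff_zero' hw
  have h := congrArg (fun f => substAlgHom (R := ℤ) hs (map (Nat.castRingHom ℤ) f))
    catalanSeries_sq_mul_X_add_one
  simp only [map_add, map_mul, map_pow, map_one, map_X, substAlgHom_X] at h
  exact ⟨substAlgHom (R := ℤ) hs (map (Nat.castRingHom ℤ) catalanSeries),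
    by linear_combination -h⟩

lemma exists_inverse (u : ℤ⟦X⟧) (hu : constantCoeff u = 1) : ∃ v : ℤ⟦X⟧, u * v = 1 :=
  (isUnit_iff_constantCoeff.2 (by simp [hu])).exists_right_inv

/-! ### Lattice paths -/

/-- The length `3y - 2x` of each step `(x, y)`. -/
def stepLen : Fin 5 → ℕ := ![3, 3, 1, 3, 3]

/-- The drift `x - y` of each step `(x, y)`. -/
def stepDrift : Fin 5 → ℤ := ![1, -1, 0, 0, 0]

/-- The number of colored paths of total length `L` and total drift `d`. -/
noncomputable def pathCount (L : ℕ) (d : ℤ) : ℕ :=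
  Nat.card {ℓ : List (Fin 5) // (ℓ.map stepLen).sum = L ∧ (ℓ.map stepDrift).sum = d}

lemma len_drift_eq (ℓ : List (Fin 5)) :
    ((ℓ.map stepLen).sum : ℤ) = 3 * ((ℓ.map steps).sum.2 : ℤ) - 2 * ((ℓ.map steps).sum.1 : ℤ) ∧
    (ℓ.map stepDrift).sum = ((ℓ.map steps).sum.1 : ℤ) - ((ℓ.map steps).sum.2 : ℤ) := by
  induction ℓ with
  | nil => simp
  | cons i ℓ ih =>
    simp only [List.map_cons, List.sum_cons, Prod.fst_add, Prod.snd_add, Nat.cast_add]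
    have hi : (stepLen i : ℤ) = 3 * ((steps i).2 : ℤ) - 2 * ((steps i).1 : ℤ) ∧
        stepDrift i = ((steps i).1 : ℤ) - ((steps i).2 : ℤ) := by
      fin_cases i <;> simp [stepLen, stepDrift, steps]
    omega

lemma N_diag (n : ℕ) : N n n = pathCount n 0 := by
  unfold N pathCount
  refine Nat.card_congr (Equiv.subtypeEquivRight fun ℓ => ?_)
  obtain ⟨h1, h2⟩ := len_drift_eq ℓ
  rw [Prod.ext_iff]
  simp only
  omega

lemma length_le_len (ℓ : List (Fin 5)) : ℓ.length ≤ (ℓ.map stepLen).sum := by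
  induction ℓ with
  | nil => simp
  | cons i ℓ ih =>
    simp only [List.map_cons, List.sum_cons, List.length_cons]
    have : 1 ≤ stepLen i := by fin_cases i <;> simp [stepLen]
    omega

instance pathFinite (p : Prop) (L : ℕ) (d : ℤ) :
    Finite {ℓ : List (Fin 5) // p ∧ (ℓ.map stepLen).sum = L ∧ (ℓ.map stepDrift).sum = d} :=
  Set.Finite.subset (List.finite_length_le (Fin 5) L) fun ℓ h => h.2.1 ▸ length_le_len ℓ

lemma pathCount_zero (d : ℤ) : pathCount 0 d = if d = 0 then 1 else 0 := by
  have hnil : ∀ ℓ : List (Fin 5), (ℓ.map stepLen).sum = 0 → ℓ = [] := fun ℓ h =>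
    List.length_eq_zero_iff.1 (Nat.le_zero.1 (h ▸ length_le_len ℓ))
  unfold pathCount
  split_ifs with hd
  · subst hd
    rw [Nat.card_eq_one_iff_unique]
    exact ⟨⟨fun a b => Subtype.ext ((hnil _ a.2.1).trans (hnil _ b.2.1).symm)⟩, ⟨[], by simp⟩⟩
  · rw [Nat.card_eq_zero]
    left
    refine ⟨fun a => hd ?_⟩
    have := a.2.2
    rw [hnil _ a.2.1] at this
    simpa using this.symm

/-- A nonempty path is its first step followed by a path. -/
def pathConsEquiv (L : ℕ) (d : ℤ) :
    {ℓ : List (Fin 5) // (ℓ.map stepLen).sum = L + 1 ∧ (ℓ.map stepDrift).sum = d} ≃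
    Σ i : Fin 5, {ℓ : List (Fin 5) // stepLen i ≤ L + 1 ∧
      (ℓ.map stepLen).sum = L + 1 - stepLen i ∧ (ℓ.map stepDrift).sum = d - stepDrift i} where
  toFun
    | ⟨[], h⟩ => absurd h.1 (by simp)
    | ⟨i :: ℓ, h⟩ => ⟨i, ℓ, by
        simp only [List.map_cons, List.sum_cons] at h
        omega⟩
  invFun x := ⟨x.1 :: x.2.1, by
    have := x.2.2
    simp only [List.map_cons, List.sum_cons]
    omega⟩
  left_inv
    | ⟨[], h⟩ => absurd h.1 (by simp)
    | ⟨i :: ℓ, h⟩ => rfl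
  right_inv _ := rfl

lemma pathCount_succ (L : ℕ) (d : ℤ) :
    pathCount (L + 1) d = ∑ i : Fin 5,
      if stepLen i ≤ L + 1 then pathCount (L + 1 - stepLen i) (d - stepDrift i) else 0 := by
  unfold pathCount
  rw [Nat.card_congr (pathConsEquiv L d), Nat.card_sigma]
  refine Finset.sum_congr rfl fun i _ => ?_
  split_ifs with h
  · simp only [h, true_and]
  · simp [h]

/-- The generating function, by length, of the paths of drift `d`. -/
noncomputable def pathSeries (d : ℤ) : ℤ⟦X⟧ := mk fun L => (pathCount L d : ℤ)

lemma pathSeries_eq (d : ℤ) :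
    pathSeries d = (if d = 0 then 1 else 0) + X * pathSeries d
      + X ^ 3 * (pathSeries (d - 1) + 2 * pathSeries d + pathSeries (d + 1)) := by
  ext L
  have hcast : ∀ f : ℤ⟦X⟧, 2 * f = f + f := two_mul
  cases L with
  | zero =>
    have : (X : ℤ⟦X⟧) ^ 3 = X * X ^ 2 := by ring
    rw [this, mul_assoc]
    simp only [map_add, coeff_zero_X_mul, pathSeries, coeff_mk, pathCount_zero]
    split_ifs <;> simp
  | succ L =>
    have h0 : coeff (L + 1) (if d = 0 then (1 : ℤ⟦X⟧) else 0) = 0 := by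
      split_ifs <;> simp [coeff_one]
    simp only [map_add, h0, hcast, coeff_succ_X_mul, coeff_X_pow_mul', pathSeries, coeff_mk]
    rw [pathCount_succ]
    simp only [Fin.sum_univ_five]
    simp [stepLen, stepDrift]
    split_ifs <;> push_cast <;> ring

/-- The path system is solved by the geometric family with ratio `c - 1`. -/
lemma pathSeries_zero (q c α : ℤ⟦X⟧) (hq : q * (1 - X) = 1) (hc : c = 1 + X ^ 3 * q * c ^ 2)
    (hα : α * (1 - 2 * (X ^ 3 * q) * c) = q) : pathSeries 0 = α := by
  set ρ : ℤ⟦X⟧ := c - 1 with hρ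
  have hρ1 : ρ * (1 - X - 2 * X ^ 3) = X ^ 3 * (1 + ρ ^ 2) := by
    rw [hρ]; linear_combination (1 - X) * hc + X ^ 3 * c ^ 2 * hq
  have hα1 : α * (1 - X - 2 * X ^ 3 - 2 * X ^ 3 * ρ) = 1 := by
    rw [hρ]; linear_combination (1 - X) * hα + (1 + 2 * α * X ^ 3 * c) * hq
  set V : ℤ → ℤ⟦X⟧ := fun d => α * ρ ^ d.natAbs with hV
  have hVeq : ∀ d : ℤ, V d = (if d = 0 then 1 else 0) + X * V d
      + X ^ 3 * (V (d - 1) + 2 * V d + V (d + 1)) := by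
    intro d
    obtain ⟨m, rfl | rfl⟩ := d.eq_nat_or_neg
    · cases m with
      | zero => simp [hV]; linear_combination hα1
      | succ m =>
        have e1 : (((m + 1 : ℕ) : ℤ) - 1).natAbs = m := by omega
        have e2 : (((m + 1 : ℕ) : ℤ) + 1).natAbs = m + 2 := by omega
        have e3 : (((m + 1 : ℕ) : ℤ)).natAbs = m + 1 := by omega
        rw [if_neg (by omega)]
        simp only [hV, e1, e2, e3]
        linear_combination α * ρ ^ m * hρ1
    · cases m with
      | zero => simp [hV]; linear_combination hα1
      | succ m =>
        have e1 : (-((m + 1 : ℕ) : ℤ) - 1).natAbs = m + 2 := by omega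
        have e2 : (-((m + 1 : ℕ) : ℤ) + 1).natAbs = m := by omega
        have e3 : (-((m + 1 : ℕ) : ℤ)).natAbs = m + 1 := by omega
        rw [if_neg (by omega)]
        simp only [hV, e1, e2, e3]
        linear_combination α * ρ ^ m * hρ1
  have hU := eq_zero_of_dvd_step (fun d => pathSeries d - V d) (fun n h d => by
    have e : pathSeries d - V d = X * ((pathSeries d - V d)
        + X ^ 2 * ((pathSeries (d - 1) - V (d - 1)) + 2 * (pathSeries d - V d)
          + (pathSeries (d + 1) - V (d + 1)))) := by
      linear_combination pathSeries_eq d - hVeq d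
    rw [e, pow_succ']
    exact mul_dvd_mul_left _ (dvd_add (h d) (Dvd.dvd.mul_left
      (dvd_add (dvd_add (h (d - 1)) ((h d).mul_left _)) (h (d + 1))) _))) 0
  have : V 0 = α := by simp [hV]
  rw [← this]
  exact sub_eq_zero.1 hU

/-! ### Coin sequences -/

/-- Bob's score minus Alice's score. -/
def lead {n : ℕ} (s : Fin n → Bool) : ℤ := (bobScore s : ℤ) - aliceScore s

/-- The change of Bob's lead caused by two consecutive flips. -/
def pairLead (b c : Bool) : ℤ := if b then (if c then -1 else 1) else 0

lemma lead_cons_cons {n : ℕ} (b c : Bool) (s : Fin n → Bool) :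
    lead (Fin.cons b (Fin.cons c s : Fin (n + 1) → Bool) : Fin (n + 2) → Bool) =
      pairLead b c + lead (Fin.cons c s : Fin (n + 1) → Bool) := by
  have hB : bobScore (Fin.cons b (Fin.cons c s : Fin (n + 1) → Bool) : Fin (n + 2) → Bool) =
      (if b = true ∧ c = false then 1 else 0)
        + bobScore (Fin.cons c s : Fin (n + 1) → Bool) := by
    unfold bobScore
    exact Fin.card_filter_univ_succ' (n := n) _
  have hA : aliceScore (Fin.cons b (Fin.cons c s : Fin (n + 1) → Bool) : Fin (n + 2) → Bool) =
      (if b = true ∧ c = true then 1 else 0)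
        + aliceScore (Fin.cons c s : Fin (n + 1) → Bool) := by
    unfold aliceScore
    exact Fin.card_filter_univ_succ' (n := n) _
  unfold lead
  rw [hA, hB]
  cases b <;> cases c <;> simp [pairLead] <;> ring

lemma lead_single (s : Fin 1 → Bool) : lead s = 0 := by
  simp [lead, bobScore, aliceScore]

lemma lead_empty (s : Fin 0 → Bool) : lead s = 0 := by
  simp [lead, bobScore, aliceScore]

/-- The sum of `sgn (k + lead)` over the sequences of `n + 1` flips that start with `b`. -/
def signSum (b : Bool) (n : ℕ) (k : ℤ) : ℤ :=
  ∑ s : Fin n → Bool, (k + lead (Fin.cons b s : Fin (n + 1) → Bool)).sign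

lemma sum_cons {n : ℕ} (f : (Fin (n + 1) → Bool) → ℤ) :
    ∑ s, f s = ∑ s : Fin n → Bool, f (Fin.cons true s : Fin (n + 1) → Bool)
      + ∑ s : Fin n → Bool, f (Fin.cons false s : Fin (n + 1) → Bool) := by
  rw [← (Fin.consEquiv fun _ => Bool).sum_comp, Fintype.sum_prod_type, Fintype.sum_bool]
  rfl

lemma signSum_zero (b : Bool) (k : ℤ) : signSum b 0 k = k.sign := by
  simp [signSum, lead_single]

lemma signSum_succ (b : Bool) (n : ℕ) (k : ℤ) :
    signSum b (n + 1) k =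
      signSum true n (k + pairLead b true) + signSum false n (k + pairLead b false) := by
  unfold signSum
  rw [sum_cons]
  simp only [lead_cons_cons, add_assoc]

lemma cB_sub_cA (n : ℕ) : (cB n : ℤ) - cA n = signSum false n 0 := by
  have h1 : (cB n : ℤ) - cA n = ∑ s : Fin n → Bool, (lead s).sign := by
    unfold cB cA
    rw [Finset.card_filter, Finset.card_filter]
    push_cast
    rw [← Finset.sum_sub_distrib]
    refine Finset.sum_congr rfl fun s _ => ?_
    unfold lead
    rcases lt_trichotomy (bobScore s) (aliceScore s) with h | h | h
    · rw [Int.sign_eq_neg_one_of_neg (by omega), if_neg (by omega), if_pos h]; rfl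
    · simp [h]
    · rw [Int.sign_eq_one_of_pos (by omega), if_pos h, if_neg (by omega)]; rfl
  rw [h1]
  cases n with
  | zero => simp [signSum, lead_single, lead_empty]
  | succ n => rw [signSum_succ, sum_cons]; simp [signSum, pairLead]

/-- The generating function of `signSum b · k`. -/
noncomputable def signSeries (b : Bool) (k : ℤ) : ℤ⟦X⟧ := mk fun n => signSum b n k

lemma signSeries_eq (b : Bool) (k : ℤ) :
    signSeries b k = C k.sign + X * (signSeries true (k + pairLead b true)
      + signSeries false (k + pairLead b false)) := by
  ext n
  cases n with
  | zero => simp [signSeries, signSum_zero]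
  | succ n =>
    have h0 : coeff (n + 1) (C k.sign) = 0 := by rw [coeff_C, if_neg n.succ_ne_zero]
    rw [map_add, h0]
    simp [signSeries, signSum_succ, coeff_succ_X_mul]

/-- The scalar recurrence for the sequences starting with tails, obtained by eliminating those
starting with heads. -/
lemma tailSeries_eq (k : ℤ) :
    (1 - X) * signSeries false k = X ^ 2 * signSeries false (k + 1)
      + X * (1 - X) * signSeries false (k - 1) + (1 + X) * C k.sign - X * C (k - 1).sign := by
  have h1 := signSeries_eq false k
  have h2 := signSeries_eq false (k - 1)
  have h3 := signSeries_eq true k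
  simp only [pairLead, if_true, add_zero, Bool.false_eq_true, if_false] at h1 h2 h3
  rw [← sub_eq_add_neg] at h3
  linear_combination h1 + X * h3 - X * h2

/-- The recurrence for sequences starting with tails is solved by a constant plus a geometric
family on either side of `0`. -/
lemma tailSeries_zero (q c α : ℤ⟦X⟧) (hq : q * (1 - X) = 1) (hc : c = 1 + X ^ 3 * q * c ^ 2)
    (hα : α * (1 - 2 * (X ^ 3 * q) * c) = q) :
    signSeries false 0 = X ^ 3 * q * c * α := by
  obtain ⟨I, hI⟩ := exists_inverse (1 - 2 * X) (by simp)
  have hα1 : α * (1 - X - 2 * X ^ 3 * c) = 1 := by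
    linear_combination (1 - X) * hα + (1 + 2 * α * X ^ 3 * c) * hq
  set D : ℤ⟦X⟧ := X ^ 3 * q * c * α with hD
  have hD1 : D * (1 - X - 2 * X ^ 3 * c) = X ^ 3 * c * q := by
    rw [hD]; linear_combination X ^ 3 * q * c * hα1
  -- the roots without constant term of the characteristic equation, one for each direction
  set a : ℤ⟦X⟧ := X * c with ha
  set b : ℤ⟦X⟧ := X ^ 2 * q * c with hb
  have ha1 : (1 - X) * a = X ^ 2 * a ^ 2 + X * (1 - X) := by
    rw [ha]; linear_combination X * (1 - X) * hc + X ^ 4 * c ^ 2 * hq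
  have hb1 : (1 - X) * b = X ^ 2 + X * (1 - X) * b ^ 2 := by
    rw [hb]; linear_combination X ^ 2 * hc + (X ^ 2 * c - X ^ 5 * q * c ^ 2) * hq
  have hb2 : (1 - X) * b = X ^ 2 * c := by
    rw [hb]; linear_combination X ^ 2 * c * hq
  set V : ℤ → ℤ⟦X⟧ := fun k =>
    if 1 ≤ k then I - (I - q - D) * a ^ k.toNat else -I + (D + I) * b ^ (-k).toNat with hV
  have hpos : ∀ m : ℕ, V (m + 1) = I - (I - q - D) * a ^ (m + 1) := by
    intro m
    simp only [hV]
    rw [if_pos (by omega), show ((m : ℤ) + 1).toNat = m + 1 by omega]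
  have hneg : ∀ m : ℕ, V (-m) = -I + (D + I) * b ^ m := by
    intro m
    simp only [hV]
    rw [if_neg (by omega), show (-(-(m : ℤ))).toNat = m by omega]
  have hVeq : ∀ k : ℤ, (1 - X) * V k = X ^ 2 * V (k + 1)
      + X * (1 - X) * V (k - 1) + (1 + X) * C k.sign - X * C (k - 1).sign := by
    intro k
    have p0 := hpos 0
    have n0 := hneg 0
    have n1 := hneg 1
    simp only [Nat.cast_zero, zero_add, neg_zero, Nat.cast_one, pow_zero, pow_one] at p0 n0 n1
    have cases_k : k = 0 ∨ k = 1 ∨ (∃ m : ℕ, k = m + 2) ∨ ∃ m : ℕ, k = -(m + 1) := by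
      rcases (by omega : k = 0 ∨ k = 1 ∨ 2 ≤ k ∨ k ≤ -1) with h | h | h | h
      · exact Or.inl h
      · exact Or.inr (Or.inl h)
      · exact Or.inr (Or.inr (Or.inl ⟨(k - 2).toNat, by omega⟩))
      · exact Or.inr (Or.inr (Or.inr ⟨(-k - 1).toNat, by omega⟩))
    rcases cases_k with rfl | rfl | ⟨m, rfl⟩ | ⟨m, rfl⟩
    · simp only [zero_add, zero_sub, p0, n0, n1, Int.sign_zero, Int.sign_neg_one, map_neg, map_one,
        map_zero]
      rw [ha]
      linear_combination hD1 + X * hI - X * (D + I) * hb2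
    · have p1 := hpos 1
      simp only [Nat.cast_one] at p1
      simp only [sub_self, p0, p1, n0, Int.sign_zero, Int.sign_one, map_one, map_zero]
      linear_combination hI - (I - q - D) * ha1 + X * hq
    · have e1 : (m : ℤ) + 2 = ((m + 1 : ℕ) : ℤ) + 1 := by push_cast; ring
      have e2 : (m : ℤ) + 2 + 1 = ((m + 2 : ℕ) : ℤ) + 1 := by push_cast; ring
      have e3 : (m : ℤ) + 2 - 1 = (m : ℤ) + 1 := by ring
      rw [e2, e3, e1, hpos, hpos, hpos, Int.sign_eq_one_of_pos (by omega),
        Int.sign_eq_one_of_pos (by omega), map_one]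
      linear_combination hI - (I - q - D) * a ^ (m + 1) * ha1
    · have e1 : -((m : ℤ) + 1) = -((m + 1 : ℕ) : ℤ) := by push_cast; ring
      have e2 : -((m : ℤ) + 1) + 1 = -(m : ℤ) := by ring
      have e3 : -((m : ℤ) + 1) - 1 = -((m + 2 : ℕ) : ℤ) := by push_cast; ring
      rw [e2, e3, e1, hneg, hneg, hneg, Int.sign_eq_neg_one_of_neg (by omega),
        Int.sign_eq_neg_one_of_neg (by omega), map_neg, map_one]
      linear_combination -hI + (D + I) * b ^ m * hb1
  have hU := eq_zero_of_dvd_step (fun k => signSeries false k - V k) (fun n h k => by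
    have e : signSeries false k - V k = X * ((signSeries false k - V k)
        + X * (signSeries false (k + 1) - V (k + 1))
        + (1 - X) * (signSeries false (k - 1) - V (k - 1))) := by
      linear_combination tailSeries_eq k - hVeq k
    rw [e, pow_succ']
    exact mul_dvd_mul_left _ (dvd_add (dvd_add (h k) ((h (k + 1)).mul_left _))
      ((h (k - 1)).mul_left _))) 0
  have h0 : V 0 = D := by simpa using hneg 0
  rw [← h0]
  exact sub_eq_zero.1 hU

/-- `Δ_n = (N(n,n) - 1)/2^(n+1)`: the colored-lattice-path count on the diagonal
    satisfies `N(n,n) = 2 (c_B(n) - c_A(n)) + 1`. -/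
theorem lattice_path_count_eq (n : ℕ) :
    (N n n : ℤ) = 2 * ((cB n : ℤ) - (cA n : ℤ)) + 1 := by
  set q : ℤ⟦X⟧ := mk 1 with hq
  have hq1 : q * (1 - X) = 1 := mk_one_mul_one_sub_eq_one ℤ
  obtain ⟨c, hc⟩ := exists_catalan (X ^ 3 * q) (by simp)
  obtain ⟨v, hv⟩ := exists_inverse (1 - 2 * (X ^ 3 * q) * c) (by simp)
  have hα : (q * v) * (1 - 2 * (X ^ 3 * q) * c) = q := by linear_combination q * hv
  have hP := pathSeries_zero q c (q * v) hq1 hc hα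
  have hT := tailSeries_zero q c (q * v) hq1 hc hα
  have key : pathSeries 0 = signSeries false 0 + signSeries false 0 + q := by
    rw [hP, hT]; linear_combination hα
  have := congrArg (coeff n) key
  simp only [map_add, pathSeries, signSeries, hq, coeff_mk, Pi.one_apply] at this
  rw [N_diag, cB_sub_cA, this]
  ring
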